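/- Let (X, d, T) be a topological dynamical system. Then for every δ ∈ (0,1), the lower metric mean dimension satisfies mdim̲_M(X,d,T) = liminf_{ε→0} (1/log(1/ε)) · sup_{μ ∈ E_T(X)} h_μ^K(ε, δ). -/

import Mathlib

open Filter MeasureTheory Set Topology

variable {X : Type*}

/-- The dynamical (Bowen) metric `d_n(x,y) = max_{0 ≤ k ≤ n-1} d(T^k x, T^k y)`. -/
noncomputable def dynDist [MetricSpace X] (T : X → X) (n : ℕ) (x y : X) : ℝ :=
  ⨆ k ∈ Finset.range n, dist (T^[k] x) (T^[k] y)

/-- The open dynamical ball `B_n(x, ε) = {y : d_n(x,y) < ε}`. -/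
def dynBall [MetricSpace X] (T : X → X) (n : ℕ) (x : X) (ε : ℝ) : Set X :=
  {y | dynDist T n x y < ε}

/-- `s_n(K, ε)`: the maximal cardinality of an `(n,ε)`-separated subset of `K`. -/
noncomputable def sepNum [MetricSpace X] (T : X → X) (n : ℕ) (K : Set X) (ε : ℝ) : ℕ :=
  sSup {m | ∃ E : Finset X, ↑E ⊆ K ∧
    (∀ x ∈ E, ∀ y ∈ E, x ≠ y → ε < dynDist T n x y) ∧ E.card = m}

/-- `S(K, ε) = limsup_n (1/n) log s_n(K, ε)`. -/
noncomputable def sepEnt [MetricSpace X] (T : X → X) (K : Set X) (ε : ℝ) : EReal :=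
  limsup (fun n : ℕ => ((Real.log (sepNum T n K ε) / n : ℝ) : EReal)) atTop

/-- `r_n(K, ε)`: the minimal cardinality of an `(n,ε)`-spanning set for `K`. -/
noncomputable def spanNum [MetricSpace X] (T : X → X) (n : ℕ) (K : Set X) (ε : ℝ) : ℕ :=
  sInf {m | ∃ F : Finset X, (∀ x ∈ K, ∃ y ∈ F, dynDist T n x y ≤ ε) ∧ F.card = m}

/-- `R(K, ε) = limsup_n (1/n) log r_n(K, ε)`. -/
noncomputable def spanEnt [MetricSpace X] (T : X → X) (K : Set X) (ε : ℝ) : EReal :=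
  limsup (fun n : ℕ => ((Real.log (spanNum T n K ε) / n : ℝ) : EReal)) atTop

/-- Upper metric mean dimension. -/
noncomputable def mdimUpper [MetricSpace X] (T : X → X) : EReal :=
  limsup (fun ε : ℝ => sepEnt T univ ε / ((Real.log (1 / ε) : ℝ) : EReal)) (𝓝[>] (0:ℝ))

/-- Lower metric mean dimension. -/
noncomputable def mdimLower [MetricSpace X] (T : X → X) : EReal :=
  liminf (fun ε : ℝ => sepEnt T univ ε / ((Real.log (1 / ε) : ℝ) : EReal)) (𝓝[>] (0:ℝ))

/-- The ergodic `T`-invariant Borel probability measures. -/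
def ergodicMeasures [MeasurableSpace X] (T : X → X) : Set (Measure X) :=
  {μ | IsProbabilityMeasure μ ∧ Ergodic T μ}

/-- `U` is a finite open cover of `X`. -/
def IsFiniteOpenCover [TopologicalSpace X] (U : Finset (Set X)) : Prop :=
  (∀ V ∈ U, IsOpen V) ∧ ⋃₀ (U : Set (Set X)) = univ

/-- The cover `U^n = ⋁_{i=0}^{n-1} T^{-i} U`. -/
def dynRefine (T : X → X) (U : Finset (Set X)) (n : ℕ) : Set (Set X) :=
  {V | ∃ f : Fin n → Set X, (∀ i, f i ∈ U) ∧ V = ⋂ i : Fin n, T^[(i : ℕ)] ⁻¹' f i}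

/-- `N(C)`: the minimal cardinality of a subcover of `C`. -/
noncomputable def coverNum (C : Set (Set X)) : ℕ :=
  sInf {m | ∃ F : Finset (Set X), ↑F ⊆ C ∧ ⋃₀ (F : Set (Set X)) = univ ∧ F.card = m}

/-- `N_μ(U^n, δ)`: minimal number of members of `U^n` needed to cover a set of measure ≥ δ. -/
noncomputable def shapiraNum [MeasurableSpace X] (T : X → X) (μ : Measure X)
    (U : Finset (Set X)) (n : ℕ) (δ : ℝ) : ℕ :=
  sInf {m | ∃ F : Finset (Set X), ↑F ⊆ dynRefine T U n ∧
    ENNReal.ofReal δ ≤ μ (⋃₀ (F : Set (Set X))) ∧ F.card = m}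

/-- Shapira's entropy `h_μ^S(U, δ) = limsup_n (1/n) log N_μ(U^n, δ)`. -/
noncomputable def shapiraEnt [MeasurableSpace X] (T : X → X) (μ : Measure X)
    (U : Finset (Set X)) (δ : ℝ) : EReal :=
  limsup (fun n : ℕ => ((Real.log (shapiraNum T μ U n δ) / n : ℝ) : EReal)) atTop

/-- `N_μ^δ(n, ε)`: smallest number of open `(n,ε)`-dynamical balls whose union has
measure `> δ`. -/
noncomputable def katokNum [MetricSpace X] [MeasurableSpace X] (T : X → X) (μ : Measure X)
    (n : ℕ) (ε δ : ℝ) : ℕ :=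
  sInf {m | ∃ F : Finset X, ENNReal.ofReal δ < μ (⋃ x ∈ F, dynBall T n x ε) ∧ F.card = m}

/-- Katok's entropy `h_μ^K(ε, δ) = limsup_n (1/n) log N_μ^δ(n, ε)`. -/
noncomputable def katokEnt [MetricSpace X] [MeasurableSpace X] (T : X → X) (μ : Measure X)
    (ε δ : ℝ) : EReal :=
  limsup (fun n : ℕ => ((Real.log (katokNum T μ n ε δ) / n : ℝ) : EReal)) atTop

/-- Lower Katok entropy `h̲_μ^K(ε, δ) = liminf_n (1/n) log N_μ^δ(n, ε)`. -/
noncomputable def katokEntLower [MetricSpace X] [MeasurableSpace X] (T : X → X) (μ : Measure X)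
    (ε δ : ℝ) : EReal :=
  liminf (fun n : ℕ => ((Real.log (katokNum T μ n ε δ) / n : ℝ) : EReal)) atTop

/-- `Ñ_μ^δ(n, ε)`: smallest number of sets of `d_n`-diameter ≤ ε whose union has
measure `> δ`. -/
noncomputable def katokNumTilde [MetricSpace X] [MeasurableSpace X] (T : X → X) (μ : Measure X)
    (n : ℕ) (ε δ : ℝ) : ℕ :=
  sInf {m | ∃ F : Finset (Set X), (∀ A ∈ F, ∀ x ∈ A, ∀ y ∈ A, dynDist T n x y ≤ ε) ∧
    ENNReal.ofReal δ < μ (⋃₀ (F : Set (Set X))) ∧ F.card = m}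

/-- Brin–Katok local entropy `h_μ^{BK}(x, ε) = limsup_n -(1/n) log μ(B_n(x, ε))`. -/
noncomputable def brinKatok [MetricSpace X] [MeasurableSpace X] (T : X → X) (μ : Measure X)
    (x : X) (ε : ℝ) : EReal :=
  limsup (fun n : ℕ => -(ENNReal.log (μ (dynBall T n x ε))) / (n : EReal)) atTop

/-- Lower Brin–Katok local entropy `h̲_μ^{BK}(x, ε) = liminf_n -(1/n) log μ(B_n(x, ε))`. -/
noncomputable def brinKatokLower [MetricSpace X] [MeasurableSpace X] (T : X → X) (μ : Measure X)
    (x : X) (ε : ℝ) : EReal :=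
  liminf (fun n : ℕ => -(ENNReal.log (μ (dynBall T n x ε))) / (n : EReal)) atTop

/-- Local entropy function `h_d(x, ε) = inf { S(K, ε) : K closed neighborhood of x }`. -/
noncomputable def locEnt [MetricSpace X] (T : X → X) (x : X) (ε : ℝ) : EReal :=
  ⨅ K ∈ {K : Set X | IsClosed K ∧ K ∈ 𝓝 x}, sepEnt T K ε

/-- Local spanning entropy `h̃_d(x, ε) = inf { R(K, ε) : K closed neighborhood of x }`. -/
noncomputable def locSpanEnt [MetricSpace X] (T : X → X) (x : X) (ε : ℝ) : EReal :=
  ⨅ K ∈ {K : Set X | IsClosed K ∧ K ∈ 𝓝 x}, spanEnt T K ε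

/-- `U_x^n`: the union of all cells of `U^n` containing `x`. -/
def dynCoverCell (T : X → X) (U : Finset (Set X)) (n : ℕ) (x : X) : Set X :=
  ⋃₀ {V | V ∈ dynRefine T U n ∧ x ∈ V}

set_option linter.unusedSectionVars false


section CovPart

variable [MetricSpace X]

lemma dynDist_bdd (T : X → X) (n : ℕ) (x y : X) :
    BddAbove (range fun k : ℕ => ⨆ (_ : k ∈ Finset.range n), dist (T^[k] x) (T^[k] y)) := by
  refine ⟨∑ k ∈ Finset.range n, dist (T^[k] x) (T^[k] y), ?_⟩
  rintro _ ⟨k, rfl⟩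
  by_cases hk : k ∈ Finset.range n
  · simp only [hk, ciSup_unique]
    exact Finset.single_le_sum (f := fun k => dist (T^[k] x) (T^[k] y))
      (fun i _ => dist_nonneg) hk
  · simp only [hk, Real.iSup_of_isEmpty]
    exact Finset.sum_nonneg fun i _ => dist_nonneg

lemma dist_le_dynDist (T : X → X) {n k : ℕ} (hk : k < n) (x y : X) :
    dist (T^[k] x) (T^[k] y) ≤ dynDist T n x y := by
  have := le_ciSup (dynDist_bdd T n x y) k
  simpa [dynDist, hk] using this

lemma dynDist_le (T : X → X) {n : ℕ} {x y : X} {r : ℝ} (hr : 0 ≤ r)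
    (h : ∀ k < n, dist (T^[k] x) (T^[k] y) ≤ r) : dynDist T n x y ≤ r := by
  refine ciSup_le fun k => ?_
  by_cases hk : k ∈ Finset.range n
  · simpa [hk] using h k (Finset.mem_range.1 hk)
  · simpa only [hk, Real.iSup_of_isEmpty]

lemma dynDist_nonneg (T : X → X) (n : ℕ) (x y : X) : 0 ≤ dynDist T n x y :=
  Real.iSup_nonneg fun k => Real.iSup_nonneg fun _ => dist_nonneg

lemma dynDist_lt (T : X → X) {n : ℕ} {x y : X} {r : ℝ} (hr : 0 < r)
    (h : ∀ k < n, dist (T^[k] x) (T^[k] y) < r) : dynDist T n x y < r := by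
  obtain ⟨r', hr', hrr, h'⟩ : ∃ r', 0 ≤ r' ∧ r' < r ∧ ∀ k < n, dist (T^[k] x) (T^[k] y) ≤ r' := by
    induction n with
    | zero => exact ⟨0, le_rfl, hr, by simp⟩
    | succ n ih =>
      obtain ⟨r', h0, h1, h2⟩ := ih fun k hk => h k (by lia)
      refine ⟨max r' (dist (T^[n] x) (T^[n] y)), le_max_of_le_left h0, max_lt h1 (h n (by lia)), ?_⟩
      intro k hk
      rcases Nat.lt_succ_iff_lt_or_eq.1 hk with hk | rfl
      · exact (h2 k hk).trans (le_max_left _ _)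
      · exact le_max_right _ _
  exact (dynDist_le T hr' h').trans_lt hrr

lemma mem_dynBall_iff (T : X → X) {n : ℕ} {x y : X} {r : ℝ} (hr : 0 < r) :
    y ∈ dynBall T n x r ↔ ∀ k < n, dist (T^[k] x) (T^[k] y) < r :=
  ⟨fun h _ hk => (dist_le_dynDist T hk x y).trans_lt h, fun h => dynDist_lt T hr h⟩

lemma isOpen_dynBall {T : X → X} (hT : Continuous T) (n : ℕ) (x : X) {r : ℝ} (hr : 0 < r) :
    IsOpen (dynBall T n x r) := by
  have : dynBall T n x r = ⋂ k ∈ Finset.range n, {y | dist (T^[k] x) (T^[k] y) < r} := by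
    ext y
    rw [mem_dynBall_iff T hr]
    simp
  rw [this]
  refine isOpen_biInter_finset fun k _ => ?_
  exact isOpen_lt (continuous_const.dist (hT.iterate k)) continuous_const

/-- `A` is covered by at most `a` sets of `d_n`-diameter at most `r`. -/
def DynCov (T : X → X) (r : ℝ) (n : ℕ) (A : Set X) (a : ℝ) : Prop :=
  ∃ F : Finset (Set X), (∀ B ∈ F, ∀ x ∈ B, ∀ y ∈ B, dynDist T n x y ≤ r) ∧
    A ⊆ ⋃₀ (F : Set (Set X)) ∧ (F.card : ℝ) ≤ a

variable {T : X → X} {r : ℝ}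

lemma DynCov.nonneg {n : ℕ} {A : Set X} {a : ℝ} (h : DynCov T r n A a) : 0 ≤ a := by
  obtain ⟨F, _, _, h⟩ := h
  exact (Nat.cast_nonneg _).trans h

lemma DynCov.mono {n : ℕ} {A B : Set X} {a b : ℝ} (h : DynCov T r n A a) (hB : B ⊆ A)
    (hb : a ≤ b) : DynCov T r n B b := by
  obtain ⟨F, h1, h2, h3⟩ := h
  exact ⟨F, h1, hB.trans h2, h3.trans hb⟩

lemma DynCov.mono_n (hr : 0 ≤ r) {n m : ℕ} {A : Set X} {a : ℝ} (h : DynCov T r n A a)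
    (hm : m ≤ n) : DynCov T r m A a := by
  obtain ⟨F, h1, h2, h3⟩ := h
  refine ⟨F, fun B hB x hx y hy => dynDist_le T hr fun k hk => ?_, h2, h3⟩
  exact (dist_le_dynDist T (hk.trans_le hm) x y).trans (h1 B hB x hx y hy)

lemma DynCov.zero (hr : 0 ≤ r) (A : Set X) : DynCov T r 0 A 1 :=
  ⟨{univ}, fun B _ x _ y _ => dynDist_le T hr (by simp), by simp, by simp⟩

lemma DynCov.empty (n : ℕ) {a : ℝ} (ha : 0 ≤ a) : DynCov T r n ∅ a :=
  ⟨∅, by simp, by simp, by simpa⟩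

lemma DynCov.union {n : ℕ} {A B : Set X} {a b : ℝ} (h : DynCov T r n A a)
    (h' : DynCov T r n B b) : DynCov T r n (A ∪ B) (a + b) := by
  classical
  obtain ⟨F, h1, h2, h3⟩ := h
  obtain ⟨G, g1, g2, g3⟩ := h'
  refine ⟨F ∪ G, ?_, ?_, ?_⟩
  · intro C hC
    rcases Finset.mem_union.1 hC with hC | hC
    · exact h1 C hC
    · exact g1 C hC
  · rw [Finset.coe_union, sUnion_union]
    exact union_subset_union h2 g2
  · have : ((F ∪ G).card : ℝ) ≤ F.card + G.card := by exact_mod_cast Finset.card_union_le F G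
    linarith

lemma DynCov.biUnion {ι : Type*} (J : Finset ι) {n : ℕ} {A : ι → Set X} {a : ι → ℝ}
    (h : ∀ j ∈ J, DynCov T r n (A j) (a j)) :
    DynCov T r n (⋃ j ∈ J, A j) (∑ j ∈ J, a j) := by
  classical
  induction J using Finset.induction_on with
  | empty => simpa using DynCov.empty n le_rfl
  | insert j J hj ih =>
    rw [Finset.sum_insert hj, Finset.set_biUnion_insert]
    exact (h j (by simp)).union (ih fun i hi => h i (by simp [hi]))

lemma DynCov.comp (hr : 0 ≤ r) {n m : ℕ} {A B : Set X} {a b : ℝ} (h : DynCov T r n A a)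
    (h' : DynCov T r m B b) : DynCov T r (n + m) (A ∩ T^[n] ⁻¹' B) (a * b) := by
  classical
  have ha := h.nonneg
  obtain ⟨F, h1, h2, h3⟩ := h
  obtain ⟨G, g1, g2, g3⟩ := h'
  refine ⟨(F ×ˢ G).image fun p => p.1 ∩ T^[n] ⁻¹' p.2, ?_, ?_, ?_⟩
  · intro C hC x hx y hy
    obtain ⟨⟨p, q⟩, hp, rfl⟩ := Finset.mem_image.1 hC
    obtain ⟨hp, hq⟩ := Finset.mem_product.1 hp
    refine dynDist_le T hr fun k hk => ?_
    by_cases hkn : k < n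
    · exact (dist_le_dynDist T hkn x y).trans (h1 p hp x hx.1 y hy.1)
    · have := (dist_le_dynDist T (show k - n < m by lia) (T^[n] x) (T^[n] y)).trans
        (g1 q hq _ hx.2 _ hy.2)
      rwa [← Function.iterate_add_apply, ← Function.iterate_add_apply,
        Nat.sub_add_cancel (not_lt.1 hkn)] at this
  · rintro x ⟨hxA, hxB⟩
    obtain ⟨p, hp, hxp⟩ := h2 hxA
    obtain ⟨q, hq, hxq⟩ := g2 hxB
    refine ⟨p ∩ T^[n] ⁻¹' q, ?_, hxp, hxq⟩
    simp only [Finset.coe_image, Finset.coe_product, mem_image, Prod.exists]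
    exact ⟨p, q, ⟨hp, hq⟩, rfl⟩
  · have : (((F ×ˢ G).image fun p => p.1 ∩ T^[n] ⁻¹' p.2).card : ℝ) ≤ F.card * G.card := by
      exact_mod_cast Finset.card_image_le.trans (Finset.card_product F G).le
    exact this.trans (mul_le_mul h3 g3 (Nat.cast_nonneg _) ha)

lemma DynCov.pow (hr : 0 ≤ r) {P : ℝ} (h : DynCov T r 1 univ P) (j : ℕ) :
    DynCov T r j univ (P ^ j) := by
  induction j with
  | zero => simpa using DynCov.zero hr univ
  | succ j ih => simpa [pow_succ] using ih.comp hr h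

/-- The number of times `k < N` with `T^k x ∉ U`. -/
noncomputable def badCount (T : X → X) (U : Set X) (N : ℕ) (x : X) : ℕ :=
  ∑ k ∈ Finset.range N, (Uᶜ).indicator (fun _ => 1) (T^[k] x)

lemma badCount_add (T : X → X) (U : Set X) (n m : ℕ) (x : X) :
    badCount T U (n + m) x = badCount T U n x + badCount T U m (T^[n] x) := by
  simp only [badCount, Finset.sum_range_add]
  congr 1
  refine Finset.sum_congr rfl fun k _ => ?_
  rw [← Function.iterate_add_apply, add_comm]

lemma badCount_anti (T : X → X) {U V : Set X} (h : U ⊆ V) (n : ℕ) (x : X) :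
    badCount T V n x ≤ badCount T U n x :=
  Finset.sum_le_sum fun _ _ =>
    indicator_le_indicator_of_subset (compl_subset_compl.2 h) (fun _ => Nat.zero_le _) _

/-- Points with at most `b` bad times before `N`. -/
def fewBad (T : X → X) (U : Set X) (N b : ℕ) : Set X := {x | badCount T U N x ≤ b}

lemma fewBad_mono (T : X → X) {U V : Set X} (h : U ⊆ V) (N b : ℕ) :
    fewBad T U N b ⊆ fewBad T V N b := fun x hx => (badCount_anti T h N x).trans hx

lemma coding (hr : 0 ≤ r) {ι : Type*} (J : Finset ι) (n : ι → ℕ) (A : ι → Set X) (a : ι → ℝ)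
    (hn : ∀ j ∈ J, 1 ≤ n j) (hA : ∀ j ∈ J, DynCov T r (n j) (A j) (a j)) {s β P : ℝ}
    (hs : 0 ≤ s) (hβ : 0 ≤ β) (hsum : ∑ j ∈ J, a j * Real.exp (-s * n j) ≤ 1 / 2)
    (hP : DynCov T r 1 univ P) (hPβ : P * Real.exp (-β) ≤ 1 / 2) :
    ∃ C : ℝ, 0 ≤ C ∧ ∀ N b : ℕ, DynCov T r N (fewBad T (⋃ j ∈ J, A j) N b)
      (C * Real.exp (s * N + β * b)) := by
  set U := ⋃ j ∈ J, A j with hU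
  set M := ∑ j ∈ J, n j with hM
  refine ⟨Real.exp (s * M), (Real.exp_pos _).le, ?_⟩
  intro N
  induction N using Nat.strong_induction_on with
  | _ N ih =>
  intro b
  rcases Nat.eq_zero_or_pos N with rfl | hN
  · refine (DynCov.zero hr _).mono le_rfl ?_
    rw [← Real.exp_add]
    apply Real.one_le_exp
    positivity
  set Z := Real.exp (s * M) * Real.exp (s * N + β * b) with hZ
  have hZ0 : 0 ≤ Z := by positivity
  have h1 : ∀ j ∈ J, DynCov T r N (A j ∩ T^[n j] ⁻¹' fewBad T U (N - n j) b)
      (a j * Real.exp (-s * n j) * Z) := by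
    intro j hj
    have ha := (hA j hj).nonneg
    by_cases hjN : n j ≤ N
    · have h := (hA j hj).comp hr (ih (N - n j) (by have := hn j hj; lia) b)
      rw [Nat.add_sub_cancel' hjN] at h
      refine h.mono le_rfl ?_
      rw [hZ, Nat.cast_sub hjN, mul_assoc, ← Real.exp_add, ← Real.exp_add, ← Real.exp_add]
      apply le_of_eq
      ring_nf
    · refine ((hA j hj).mono_n hr (not_le.1 hjN).le).mono inter_subset_left ?_
      rw [hZ, mul_assoc, ← Real.exp_add, ← Real.exp_add]
      refine le_mul_of_one_le_right ha (Real.one_le_exp ?_)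
      have h2 : (n j : ℝ) ≤ M := by
        exact_mod_cast Finset.single_le_sum (f := n) (fun i _ => Nat.zero_le _) hj
      have h3 : 0 ≤ s * (M - n j) := mul_nonneg hs (by linarith)
      have h4 : 0 ≤ s * N + β * b := by positivity
      nlinarith
  have h2 : DynCov T r N {x | x ∉ U ∧ x ∈ fewBad T U N b} (P * Real.exp (-β) * Z) := by
    rcases Nat.eq_zero_or_pos b with rfl | hb
    · have : {x | x ∉ U ∧ x ∈ fewBad T U N 0} = ∅ := by
        ext x
        simp only [mem_ofPred_eq, mem_empty_iff_false, iff_false, not_and]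
        intro hx h
        have h' : badCount T U (1 + (N - 1)) x ≤ 0 := by
          rw [Nat.add_sub_cancel' hN]; exact h
        rw [badCount_add] at h'
        simp [badCount, hx] at h'
      rw [this]
      exact DynCov.empty _ (mul_nonneg (mul_nonneg hP.nonneg (Real.exp_pos _).le) hZ0)
    · have h := hP.comp hr (ih (N - 1) (by lia) (b - 1))
      rw [Nat.add_sub_cancel' hN] at h
      refine h.mono ?_ ?_
      · rintro x ⟨hx, hxb⟩
        refine ⟨mem_univ _, ?_⟩
        have h' : badCount T U (1 + (N - 1)) x ≤ b := by
          rw [Nat.add_sub_cancel' hN]; exact hxb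
        rw [badCount_add] at h'
        have h'' : badCount T U 1 x = 1 := by simp [badCount, hx]
        change badCount T U (N - 1) (T^[1] x) ≤ b - 1
        lia
      · rw [mul_assoc]
        refine mul_le_mul_of_nonneg_left ?_ hP.nonneg
        rw [hZ, Nat.cast_sub hN, Nat.cast_sub hb, ← Real.exp_add, ← Real.exp_add, ← Real.exp_add]
        apply Real.exp_le_exp.2
        push_cast
        nlinarith
  refine ((DynCov.biUnion J h1).union h2).mono ?_ ?_
  · intro x hx
    by_cases hxU : x ∈ U
    · left
      obtain ⟨j, hj, hxj⟩ := mem_iUnion₂.1 hxU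
      refine mem_iUnion₂.2 ⟨j, hj, hxj, ?_⟩
      change badCount T U (N - n j) (T^[n j] x) ≤ b
      by_cases hjN : n j ≤ N
      · have h' : badCount T U (n j + (N - n j)) x ≤ b := by
          rw [Nat.add_sub_cancel' hjN]; exact hx
        rw [badCount_add] at h'
        lia
      · have : N - n j = 0 := by lia
        simp [this, badCount]
    · exact Or.inr ⟨hxU, hx⟩
  · rw [← Finset.sum_mul]
    nlinarith

end CovPart

section ErgPart

variable [MetricSpace X] [CompactSpace X] [MeasurableSpace X] [BorelSpace X]

lemma exists_ergodic_of_invariant {T : X → X} (hT : Continuous T) {C : Set X} (hC : IsClosed C)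
    (ν : ProbabilityMeasure X) (hν : MeasurePreserving T (ν : Measure X) (ν : Measure X)) :
    ∃ μ ∈ ergodicMeasures T, (ν : Measure X) C ≤ μ C := by
  have husc : UpperSemicontinuous (fun ν : ProbabilityMeasure X => (ν : Measure X) C) := by
    rw [upperSemicontinuous_iff_limsup_le]
    intro ν
    exact ProbabilityMeasure.limsup_measure_closed_le_of_tendsto (tendsto_id) hC
  set I : Set (ProbabilityMeasure X) := {ν | ν.map hT.aemeasurable = ν} with hI
  have hmp : ∀ ν : ProbabilityMeasure X, ν ∈ I ↔
      MeasurePreserving T (ν : Measure X) (ν : Measure X) := by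
    intro ν
    rw [hI, mem_ofPred_eq]
    constructor
    · intro h
      refine ⟨hT.measurable, ?_⟩
      have := congrArg ProbabilityMeasure.toMeasure h
      simpa using this
    · intro h
      apply ProbabilityMeasure.toMeasure_injective
      simpa using h.map_eq
  have hIc : IsClosed I :=
    isClosed_eq (ProbabilityMeasure.continuous_map hT) continuous_id
  obtain ⟨m, hmI, hmax⟩ := UpperSemicontinuousOn.exists_isMaxOn ⟨ν, (hmp ν).2 hν⟩ hIc.isCompact
    (husc.upperSemicontinuousOn I)
  set F : Set (ProbabilityMeasure X) := I ∩ {ν | (m : Measure X) C ≤ (ν : Measure X) C} with hF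
  have hFc : IsCompact F := (hIc.inter (husc.isClosed_preimage ((m : Measure X) C))).isCompact
  set φ : ProbabilityMeasure X → (BoundedContinuousFunction X ℝ → ℝ) :=
    fun ν f => ∫ x, f x ∂(ν : Measure X) with hφ
  have hφc : Continuous φ := by
    refine continuous_pi fun f => ?_
    exact ProbabilityMeasure.continuous_integral_boundedContinuousFunction f
  have hφi : ∀ α β : ProbabilityMeasure X, φ α = φ β → α = β := by
    intro α β h
    apply ProbabilityMeasure.toMeasure_injective
    exact ext_of_forall_integral_eq_of_IsFiniteMeasure fun f => congrFun h f
  obtain ⟨z, hz⟩ := (hFc.image hφc).extremePoints_nonempty ⟨φ m, m, ⟨hmI, le_refl ((m : Measure X) C)⟩, rfl⟩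
  obtain ⟨⟨μ, hμF, rfl⟩, hext⟩ := hz
  refine ⟨μ, ⟨inferInstance, ?_⟩, (hmax ((hmp ν).2 hν)).trans hμF.2⟩
  apply Ergodic.of_mem_extremePoints
  refine ⟨⟨(hmp μ).1 hμF.1, inferInstance⟩, ?_⟩
  rintro α ⟨hαi, hαp⟩ β ⟨hβi, hβp⟩ ⟨a, b, ha, hb, hab, hμ⟩
  have haT : a ≠ ⊤ := by rintro rfl; simp at hab
  have hbT : b ≠ ⊤ := by rintro rfl; simp at hab
  set α' : ProbabilityMeasure X := ⟨α, hαp⟩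
  set β' : ProbabilityMeasure X := ⟨β, hβp⟩
  have hαI : α' ∈ I := (hmp α').2 hαi
  have hβI : β' ∈ I := (hmp β').2 hβi
  have hαm : α C ≤ (m : Measure X) C := hmax hαI
  have hβm : β C ≤ (m : Measure X) C := hmax hβI
  have hμC : (m : Measure X) C ≤ a * α C + b * β C := by
    have h := hμF.2
    have h2 : (μ : Measure X) C = a * α C + b * β C := by rw [← hμ]; simp
    rw [← h2]; exact h
  have hmT : (m : Measure X) C ≠ ⊤ := measure_ne_top _ _
  have key : ∀ u v : ENNReal, ∀ c d : ENNReal, 0 < c → c ≠ ⊤ → d ≠ ⊤ → c + d = 1 →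
      u ≤ (m : Measure X) C → v ≤ (m : Measure X) C → (m : Measure X) C ≤ c * u + d * v →
      (m : Measure X) C ≤ u := by
    intro u v c d hc hcT hdT hcd hu hv h
    by_contra hlt
    push Not at hlt
    have h1 : c * u < c * (m : Measure X) C := ENNReal.mul_lt_mul_right hc.ne' hcT hlt
    have h2 : d * v ≤ d * (m : Measure X) C := by gcongr
    have h3 : c * u + d * v < c * (m : Measure X) C + d * (m : Measure X) C :=
      ENNReal.add_lt_add_of_lt_of_le (ENNReal.mul_ne_top hdT (ne_top_of_le_ne_top hmT hv)) h1 h2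
    rw [← add_mul, hcd, one_mul] at h3
    exact absurd h (not_le.2 h3)
  have hαF : α' ∈ F := ⟨hαI, key _ _ a b ha haT hbT hab hαm hβm hμC⟩
  have hβF : β' ∈ F := ⟨hβI, key _ _ b a hb hbT haT (by rw [add_comm]; exact hab) hβm hαm
    (by rw [add_comm]; exact hμC)⟩
  have hseg : φ μ ∈ openSegment ℝ (φ α') (φ β') := by
    refine ⟨a.toReal, b.toReal, ENNReal.toReal_pos ha.ne' haT, ENNReal.toReal_pos hb.ne' hbT, ?_, ?_⟩
    · rw [← ENNReal.toReal_add haT hbT, hab]; simp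
    · funext f
      have : ∫ x, f x ∂(μ : Measure X) = a.toReal * ∫ x, f x ∂α + b.toReal * ∫ x, f x ∂β := by
        rw [← hμ, integral_add_measure, integral_smul_measure, integral_smul_measure]
        · simp
        · exact (f.integrable α).smul_measure haT
        · exact (f.integrable β).smul_measure hbT
      simp only [Pi.add_apply, Pi.smul_apply, smul_eq_mul, hφ]
      exact this.symm
  have := hext ⟨α', hαF, rfl⟩ ⟨β', hβF, rfl⟩ hseg
  exact congrArg ProbabilityMeasure.toMeasure (hφi _ _ this)

/-- Empirical measure. -/
noncomputable def empMeas (T : X → X) (N : ℕ) (x : X) : Measure X :=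
  ((N : ENNReal)⁻¹) • ∑ k ∈ Finset.range N, Measure.dirac (T^[k] x)

lemma empMeas_prob (T : X → X) {N : ℕ} (hN : 0 < N) (x : X) :
    IsProbabilityMeasure (empMeas T N x) := by
  constructor
  simp only [empMeas, Measure.smul_apply, Measure.finsetSum_apply, measure_univ, smul_eq_mul,
    Finset.sum_const, Finset.card_range, nsmul_eq_mul, mul_one]
  exact ENNReal.inv_mul_cancel (by simpa using hN.ne') (by simp)

lemma empMeas_compl (T : X → X) (N : ℕ) (x : X) {U : Set X} (hU : MeasurableSet U) :
    empMeas T N x Uᶜ = (N : ENNReal)⁻¹ * (badCount T U N x : ENNReal) := by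
  simp only [empMeas, Measure.smul_apply, Measure.finsetSum_apply, smul_eq_mul, badCount]
  congr 1
  push_cast
  refine Finset.sum_congr rfl fun k _ => ?_
  rw [Measure.dirac_apply' _ hU.compl]
  by_cases h : T^[k] x ∈ U <;> simp [h]

lemma empMeas_integral (T : X → X) (N : ℕ) (x : X) (f : BoundedContinuousFunction X ℝ) :
    ∫ y, f y ∂(empMeas T N x) = (N : ℝ)⁻¹ * ∑ k ∈ Finset.range N, f (T^[k] x) := by
  rw [empMeas, integral_smul_measure, integral_finsetSum_measure]
  · simp
  · intro i _
    exact f.integrable _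

lemma uniform_visits {T : X → X} (hT : Continuous T) (A : ℕ → Set X) (hA : ∀ i, IsOpen (A i))
    {θ : ℝ} (hθ : 0 < θ)
    (h : ∀ μ ∈ ergodicMeasures T, μ (⋃ i, A i)ᶜ ≤ ENNReal.ofReal θ) :
    ∃ q N₀ : ℕ, ∀ N ≥ N₀, ∀ x,
      (badCount T (⋃ i ∈ Finset.range q, A i) N x : ℝ) ≤ 2 * θ * N := by
  by_contra hcon
  push Not at hcon
  choose N hN x hx using fun q : ℕ => hcon q (q + 1)
  have hNpos : ∀ q, 0 < N q := fun q => by have := hN q; lia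
  set G : ℕ → Set X := fun q => ⋃ i ∈ Finset.range q, A i with hG
  have hGo : ∀ q, IsOpen (G q) := fun q => isOpen_biUnion fun i _ => hA i
  have hGm : Monotone G := by
    intro p q hpq
    exact biUnion_subset_biUnion_left (by simpa using hpq)
  set ν : ℕ → ProbabilityMeasure X := fun q => ⟨empMeas T (N q) (x q), empMeas_prob T (hNpos q) _⟩
  set 𝒰 : Ultrafilter ℕ := Ultrafilter.of atTop
  have hU : (𝒰 : Filter ℕ) ≤ atTop := Ultrafilter.of_le _
  obtain ⟨μ, -, hμ⟩ := isCompact_univ.ultrafilter_le_nhds (𝒰.map ν) (by simp)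
  have hlim : Tendsto ν 𝒰 (𝓝 μ) := hμ
  have hNR : Tendsto (fun q => (N q : ℝ)) 𝒰 atTop := by
    refine Tendsto.mono_left ?_ hU
    refine tendsto_atTop_mono (f := fun q : ℕ => (q : ℝ)) (fun q => ?_) tendsto_natCast_atTop_atTop
    exact_mod_cast (Nat.le_succ q).trans (hN q)
  have hinv : MeasurePreserving T (μ : Measure X) (μ : Measure X) := by
    refine ⟨hT.measurable, ?_⟩
    have : IsProbabilityMeasure ((μ : Measure X).map T) :=
      Measure.isProbabilityMeasure_map hT.aemeasurable
    refine ext_of_forall_integral_eq_of_IsFiniteMeasure fun f => ?_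
    rw [integral_map hT.aemeasurable f.continuous.aestronglyMeasurable]
    set g : BoundedContinuousFunction X ℝ := f.compContinuous ⟨T, hT⟩
    have h1 := ProbabilityMeasure.tendsto_iff_forall_integral_tendsto.1 hlim f
    have h2 := ProbabilityMeasure.tendsto_iff_forall_integral_tendsto.1 hlim g
    have h3 : Tendsto (fun q => ∫ y, g y ∂(ν q : Measure X) - ∫ y, f y ∂(ν q : Measure X)) 𝒰
        (𝓝 0) := by
      have hz : Tendsto (fun q => (N q : ℝ)⁻¹ * (2 * ‖f‖)) 𝒰 (𝓝 0) := by
        simpa using (tendsto_inv_atTop_zero.comp hNR).mul_const (2 * ‖f‖)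
      refine squeeze_zero_norm (fun q => ?_) hz
      have e1 : ∫ y, g y ∂(ν q : Measure X) = (N q : ℝ)⁻¹ * ∑ k ∈ Finset.range (N q), g (T^[k] (x q)) :=
        empMeas_integral T (N q) (x q) g
      have e2 : ∫ y, f y ∂(ν q : Measure X) = (N q : ℝ)⁻¹ * ∑ k ∈ Finset.range (N q), f (T^[k] (x q)) :=
        empMeas_integral T (N q) (x q) f
      rw [e1, e2, ← mul_sub, ← Finset.sum_sub_distrib]
      have e3 : ∀ k, g (T^[k] (x q)) = f (T^[k+1] (x q)) := by
        intro k
        rw [Function.iterate_succ_apply']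
        rfl
      simp only [e3]
      rw [Finset.sum_range_sub (fun k => f (T^[k] (x q))), norm_mul, norm_inv, Real.norm_natCast]
      gcongr
      refine (norm_sub_le _ _).trans ?_
      have := f.norm_coe_le_norm (T^[N q] (x q))
      have := f.norm_coe_le_norm (T^[0] (x q))
      linarith
    have h4 := tendsto_nhds_unique (h2.sub h1) h3
    exact sub_eq_zero.1 h4
  have hGp : ∀ p, ENNReal.ofReal (2 * θ) ≤ (μ : Measure X) (G p)ᶜ := by
    intro p
    refine le_trans ?_ (ProbabilityMeasure.limsup_measure_closed_le_of_tendsto hlim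
      (hGo p).isClosed_compl)
    refine le_limsup_of_frequently_le ?_ ⟨⊤, by simp⟩
    refine Eventually.frequently ?_
    filter_upwards [hU (eventually_ge_atTop p)] with q hq
    refine le_trans ?_ (measure_mono (compl_subset_compl.2 (hGm hq)))
    change _ ≤ empMeas T (N q) (x q) (G q)ᶜ
    rw [empMeas_compl T _ _ (hGo q).measurableSet]
    have h5 := hx q
    have hp : (0 : ℝ) < N q := by exact_mod_cast hNpos q
    have h6 : 2 * θ ≤ (N q : ℝ)⁻¹ * badCount T (G q) (N q) (x q) := by
      rw [inv_mul_eq_div, le_div_iff₀ hp]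
      exact h5.le
    refine (ENNReal.ofReal_le_ofReal h6).trans ?_
    rw [ENNReal.ofReal_mul (by positivity), ENNReal.ofReal_inv_of_pos hp, ENNReal.ofReal_natCast,
      ENNReal.ofReal_natCast]
  have hGall : ENNReal.ofReal (2 * θ) ≤ (μ : Measure X) (⋃ i, A i)ᶜ := by
    have e : (⋃ i, A i)ᶜ = ⋂ p, (G p)ᶜ := by
      rw [← compl_iUnion]
      congr 1
      ext y
      simp only [hG, mem_iUnion, Finset.mem_range]
      exact ⟨fun ⟨i, hi⟩ => ⟨i + 1, i, by lia, hi⟩, fun ⟨_, i, _, hi⟩ => ⟨i, hi⟩⟩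
    rw [e]
    refine ge_of_tendsto' (tendsto_measure_iInter_atTop (fun p => (hGo p).measurableSet.compl.nullMeasurableSet)
      (fun p q hpq => compl_subset_compl.2 (hGm hpq)) ⟨0, measure_ne_top _ _⟩) hGp
  obtain ⟨m, hm, hmC⟩ := exists_ergodic_of_invariant hT (isOpen_iUnion hA).isClosed_compl μ hinv
  have h7 := (hGall.trans hmC).trans (h m hm)
  rw [ENNReal.ofReal_le_ofReal_iff hθ.le] at h7
  linarith

lemma exists_ergodic [Nonempty X] {T : X → X} (hT : Continuous T) :
    ∃ μ, μ ∈ ergodicMeasures T := by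
  by_contra hcon
  push Not at hcon
  obtain ⟨q, N₀, h⟩ := uniform_visits hT (fun _ => ∅) (fun _ => isOpen_empty)
    (θ := 1 / 4) (by norm_num) (fun μ hμ => absurd hμ (hcon μ))
  have := h (N₀ + 1) (by lia) (Classical.arbitrary X)
  simp [badCount] at this
  have h0 : (0 : ℝ) ≤ N₀ := Nat.cast_nonneg _
  linarith

end ErgPart

section MainPart

variable [MetricSpace X] [CompactSpace X] [MeasurableSpace X] [BorelSpace X]

lemma bootstrap {T : X → X} (hT : Continuous T) {r : ℝ} (hr : 0 ≤ r) {μ : Measure X}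
    (hμ : μ ∈ ergodicMeasures T) {δ : ENNReal} (hδ : 0 < δ) {s s₁ β P : ℝ} (hs : 0 ≤ s)
    (hs₁ : s < s₁) (hβ : 0 ≤ β) (hP : DynCov T r 1 univ P) (hPβ : P * Real.exp (-β) ≤ 1 / 2)
    (A : ℕ → Set X) (hAo : ∀ n, IsOpen (A n))
    (hA : ∀ n, DynCov T r n (A n) (Real.exp (n * s))) (hAμ : ∀ᶠ n in atTop, δ ≤ μ (A n))
    {c : ENNReal} (hc : c < 1) :
    ∃ U : Set X, IsOpen U ∧ c < μ U ∧ ∃ C : ℝ, 0 ≤ C ∧ ∀ N b : ℕ,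
      DynCov T r N (fewBad T U N b) (C * Real.exp (s₁ * N + β * b)) := by
  obtain ⟨hprob, herg⟩ := hμ
  set B : ℕ → Set X := fun L => ⋃ n ∈ Ici L, A n with hB
  have hBo : ∀ L, IsOpen (B L) := fun L => isOpen_biUnion fun n _ => hAo n
  have hBanti : Antitone B := fun L M h => biUnion_subset_biUnion_left (Ici_subset_Ici.2 h)
  set Z : Set X := ⋂ L, B L with hZ
  have hZm : MeasurableSet Z := MeasurableSet.iInter fun L => (hBo L).measurableSet
  have hZμ : δ ≤ μ Z := by
    refine ge_of_tendsto' (tendsto_measure_iInter_atTop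
      (fun L => (hBo L).measurableSet.nullMeasurableSet) hBanti ⟨0, measure_ne_top _ _⟩) ?_
    intro L
    obtain ⟨n, hn, hn'⟩ := (hAμ.and (eventually_ge_atTop L)).exists
    exact hn.trans (measure_mono (subset_biUnion_of_mem (u := A) (show n ∈ Ici L from hn')))
  set E : Set X := ⋃ j : ℕ, T^[j] ⁻¹' Z with hE
  have hEm : MeasurableSet E :=
    MeasurableSet.iUnion fun j => (hT.iterate j).measurable hZm
  have hE1 : μ E = 1 := by
    have hsub : T ⁻¹' E ⊆ E := by
      intro x hx
      obtain ⟨j, hj⟩ := mem_iUnion.1 hx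
      exact mem_iUnion.2 ⟨j + 1, hj⟩
    rcases herg.ae_empty_or_univ_of_preimage_ae_le hEm.nullMeasurableSet
      (LE.le.eventuallyLE hsub) with h | h
    · exfalso
      have h0 : μ E = 0 := by rw [measure_congr h]; simp
      have : μ Z ≤ μ E := measure_mono (subset_iUnion (fun j : ℕ => T^[j] ⁻¹' Z) 0)
      rw [h0] at this
      exact absurd (hδ.trans_le hZμ) (not_lt.2 this)
    · rw [measure_congr h]; simp
  obtain ⟨m, hm⟩ : ∃ m : ℕ, c < μ (⋃ j ∈ Finset.range (m + 1), T^[j] ⁻¹' Z) := by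
    have hmono : Monotone fun m : ℕ => ⋃ j ∈ Finset.range (m + 1), T^[j] ⁻¹' Z := by
      intro a b hab
      exact biUnion_subset_biUnion_left (by simpa using hab)
    have ht := tendsto_measure_iUnion_atTop (μ := μ) hmono
    have e : (⋃ m : ℕ, ⋃ j ∈ Finset.range (m + 1), T^[j] ⁻¹' Z) = E := by
      ext y
      simp only [hE, mem_iUnion, Finset.mem_range]
      exact ⟨fun ⟨_, i, _, hi⟩ => ⟨i, hi⟩, fun ⟨i, hi⟩ => ⟨i, i, by lia, hi⟩⟩
    rw [e, hE1] at ht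
    exact (ht.eventually_const_lt hc).exists
  set q := Real.exp (-(s₁ - s)) with hq
  have hq0 : 0 < q := Real.exp_pos _
  have hq1 : q < 1 := by
    rw [hq, ← Real.exp_zero]
    exact Real.exp_lt_exp.2 (by linarith)
  set S := ∑ j ∈ Finset.range (m + 1), P ^ j with hS
  have hP0 := hP.nonneg
  have hS0 : 0 ≤ S := Finset.sum_nonneg fun j _ => pow_nonneg hP0 j
  obtain ⟨L, hL1, hL⟩ : ∃ L : ℕ, 1 ≤ L ∧ S * (q ^ L / (1 - q)) ≤ 1 / 2 := by
    have ht : Tendsto (fun L : ℕ => S * (q ^ L / (1 - q))) atTop (𝓝 (S * (0 / (1 - q)))) :=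
      ((tendsto_pow_atTop_nhds_zero_of_lt_one hq0.le hq1).div_const _).const_mul S
    simp only [zero_div, mul_zero] at ht
    obtain ⟨L, h1, h2⟩ := ((ht.eventually_le_const (show (0 : ℝ) < 1 / 2 by norm_num)).and
      (eventually_ge_atTop 1)).exists
    exact ⟨L, h2, h1⟩
  set V : ℕ → Set X := fun M => ⋃ p ∈ Finset.range (m + 1) ×ˢ Finset.Ico L M, T^[p.1] ⁻¹' A p.2
    with hV
  obtain ⟨M, hM⟩ : ∃ M : ℕ, c < μ (V M) := by
    have hmono : Monotone V := by
      intro a b hab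
      refine biUnion_subset_biUnion_left ?_
      intro p hp
      simp only [Finset.coe_product, Finset.coe_range, Finset.coe_Ico, mem_prod, mem_Iio,
        mem_Ico] at hp ⊢
      lia
    have ht := tendsto_measure_iUnion_atTop (μ := μ) hmono
    have e : (⋃ j ∈ Finset.range (m + 1), T^[j] ⁻¹' Z) ⊆ ⋃ M, V M := by
      intro y hy
      obtain ⟨j, hj, hy⟩ := mem_iUnion₂.1 hy
      obtain ⟨n, hn, hyn⟩ := mem_iUnion₂.1 (mem_iInter.1 hy L)
      refine mem_iUnion.2 ⟨n + 1, mem_iUnion₂.2 ⟨(j, n), ?_, hyn⟩⟩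
      have hn' : L ≤ n := hn
      simp only [Finset.mem_product, Finset.mem_Ico]
      exact ⟨hj, hn', by lia⟩
    exact (ht.eventually_const_lt (hm.trans_le (measure_mono e))).exists
  refine ⟨V M, isOpen_biUnion fun p _ => (hAo _).preimage (hT.iterate _), hM, ?_⟩
  refine coding hr (Finset.range (m + 1) ×ˢ Finset.Ico L M) (fun p => p.1 + p.2)
    (fun p => T^[p.1] ⁻¹' A p.2) (fun p => P ^ p.1 * Real.exp (p.2 * s)) ?_ ?_
    (hs.trans hs₁.le) hβ ?_ hP hPβ
  · intro p hp
    simp only [Finset.mem_product, Finset.mem_Ico] at hp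
    lia
  · intro p _
    simpa using (hP.pow hr p.1).comp hr (hA p.2)
  · calc _ ≤ ∑ p ∈ Finset.range (m + 1) ×ˢ Finset.Ico L M, P ^ p.1 * q ^ p.2 := by
          refine Finset.sum_le_sum fun p _ => ?_
          rw [mul_assoc]
          refine mul_le_mul_of_nonneg_left ?_ (pow_nonneg hP0 _)
          rw [hq, ← Real.exp_nat_mul, ← Real.exp_add]
          apply Real.exp_le_exp.2
          push_cast
          have : 0 ≤ s₁ * (p.1 : ℝ) := mul_nonneg (hs.trans hs₁.le) (Nat.cast_nonneg _)
          nlinarith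
      _ = S * ∑ n ∈ Finset.Ico L M, q ^ n := by
          rw [Finset.sum_product, hS, Finset.sum_mul_sum]
      _ ≤ S * (q ^ L / (1 - q)) :=
          mul_le_mul_of_nonneg_left (geom_sum_Ico_le_of_lt_one hq0.le hq1) hS0
      _ ≤ 1 / 2 := hL

lemma isOpen_fewBad {T : X → X} (hT : Continuous T) {U : Set X} (hU : IsOpen U) (N b : ℕ) :
    IsOpen (fewBad T U N b) := by
  rw [isOpen_iff_mem_nhds]
  intro x hx
  have h : ∀ k ∈ Finset.range N, ∀ᶠ y in 𝓝 x, T^[k] x ∈ U → T^[k] y ∈ U := by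
    intro k _
    by_cases hk : T^[k] x ∈ U
    · filter_upwards [(hU.preimage (hT.iterate k)).mem_nhds hk] with y hy _ using hy
    · simp [hk]
  filter_upwards [(eventually_all_finset _).2 h] with y hy
  have hx' : badCount T U N x ≤ b := hx
  change badCount T U N y ≤ b
  refine le_trans ?_ hx'
  unfold badCount
  refine Finset.sum_le_sum fun k hk => ?_
  by_cases hk' : T^[k] x ∈ U
  · simp [hk', hy k hk hk']
  · simp only [mem_compl_iff, hk', not_false_eq_true, indicator_of_mem]
    exact indicator_le_self' (f := fun _ => 1) (by simp) _

lemma measure_fewBad {T : X → X} (hT : Continuous T) {μ : Measure X}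
    (hμ : MeasurePreserving T μ μ) {U : Set X} (hU : IsOpen U) {θ : ℝ} (hθ : 0 < θ)
    (h : μ Uᶜ ≤ ENNReal.ofReal (θ ^ 2)) {K : ℕ} (hK : 1 ≤ K) :
    μ (fewBad T U K ⌊θ * K⌋₊)ᶜ ≤ ENNReal.ofReal θ := by
  have hlint : ∫⁻ x, (badCount T U K x : ENNReal) ∂μ = K * μ Uᶜ := by
    have e : ∀ x, (badCount T U K x : ENNReal) =
        ∑ k ∈ Finset.range K, (T^[k] ⁻¹' Uᶜ).indicator (fun _ => (1 : ENNReal)) x := by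
      intro x
      simp only [badCount]
      push_cast
      refine Finset.sum_congr rfl fun k _ => ?_
      by_cases hk : T^[k] x ∈ U <;> simp [hk]
    simp only [e]
    have hm : ∀ k, MeasurableSet (T^[k] ⁻¹' Uᶜ) := fun k =>
      (hT.iterate k).measurable hU.measurableSet.compl
    rw [lintegral_finsetSum _ fun k _ => measurable_const.indicator (hm k)]
    have : ∀ k ∈ Finset.range K, ∫⁻ x, (T^[k] ⁻¹' Uᶜ).indicator (fun _ => (1 : ENNReal)) x ∂μ
        = μ Uᶜ := by
      intro k _
      rw [lintegral_indicator_const (hm k), one_mul,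
        (hμ.iterate k).measure_preimage hU.measurableSet.compl.nullMeasurableSet]
    rw [Finset.sum_congr rfl this]
    simp
  have hKp : (0 : ℝ) < θ * K := by
    have : (0 : ℝ) < K := by exact_mod_cast hK
    positivity
  have hsub : (fewBad T U K ⌊θ * K⌋₊)ᶜ ⊆
      {x | ENNReal.ofReal (θ * K) ≤ (badCount T U K x : ENNReal)} := by
    intro x hx
    have hx' : ⌊θ * K⌋₊ < badCount T U K x := not_le.1 hx
    change ENNReal.ofReal (θ * K) ≤ (badCount T U K x : ENNReal)
    rw [← ENNReal.ofReal_natCast]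
    exact ENNReal.ofReal_le_ofReal (Nat.lt_of_floor_lt hx').le
  refine (measure_mono hsub).trans ?_
  have hmk := mul_meas_ge_le_lintegral₀ (μ := μ) (f := fun x => (badCount T U K x : ENNReal)) ?_
    (ENNReal.ofReal (θ * K))
  · rw [hlint] at hmk
    have h2 : (K : ENNReal) * μ Uᶜ ≤ ENNReal.ofReal (θ * K) * ENNReal.ofReal θ := by
      refine (mul_le_mul_right h _).trans ?_
      rw [← ENNReal.ofReal_natCast, ← ENNReal.ofReal_mul (by positivity),
        ← ENNReal.ofReal_mul hKp.le]
      apply ENNReal.ofReal_le_ofReal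
      apply le_of_eq
      ring
    exact (ENNReal.mul_le_mul_iff_right (by simpa using hKp) ENNReal.ofReal_ne_top).1 (hmk.trans h2)
  · refine Measurable.aemeasurable ?_
    have : Measurable fun x => badCount T U K x := by
      refine Finset.measurable_fun_sum _ fun k _ => ?_
      exact (measurable_const.indicator hU.measurableSet.compl).comp (hT.iterate k).measurable
    exact (measurable_of_countable (fun n : ℕ => (n : ENNReal))).comp this

lemma exists_countable_opens :
    ∃ W : ℕ → Set X, (∀ i, IsOpen (W i)) ∧ ∀ (μ : Measure X) (U : Set X) (c : ENNReal),
      IsOpen U → c < μ U → ∃ i, W i ⊆ U ∧ c < μ (W i) := by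
  obtain ⟨b, hbc, -, hb⟩ := TopologicalSpace.exists_countable_basis X
  set 𝒱 : Set (Set X) := (fun F : Set (Set X) => ⋃₀ F) '' {F | F.Finite ∧ F ⊆ b} with h𝒱
  have hcount : 𝒱.Countable := (Set.countable_ofPred_finite_subset hbc).image _
  have hne : 𝒱.Nonempty := ⟨∅, ∅, ⟨finite_empty, empty_subset _⟩, by simp⟩
  obtain ⟨W, hW⟩ := hcount.exists_eq_range hne
  refine ⟨W, ?_, ?_⟩
  · intro i
    obtain ⟨F, ⟨_, hF⟩, hFW⟩ : W i ∈ 𝒱 := hW ▸ mem_range_self i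
    rw [← hFW]
    exact isOpen_sUnion fun t ht => hb.isOpen (hF ht)
  · intro μ U c hU hc
    set t : Set (Set X) := {V ∈ 𝒱 | V ⊆ U} with ht
    have htc : t.Countable := hcount.mono fun V hV => hV.1
    have hdir : DirectedOn (Function.onFun (· ⊆ ·) (id : Set X → Set X)) t := by
      rintro V ⟨⟨F, ⟨hF, hFb⟩, rfl⟩, hVU⟩ V' ⟨⟨F', ⟨hF', hFb'⟩, rfl⟩, hVU'⟩
      refine ⟨⋃₀ (F ∪ F'), ⟨⟨F ∪ F', ⟨hF.union hF', union_subset hFb hFb'⟩, rfl⟩, ?_⟩, ?_, ?_⟩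
      · rw [sUnion_union]; exact union_subset hVU hVU'
      · exact sUnion_subset_sUnion subset_union_left
      · exact sUnion_subset_sUnion subset_union_right
    have hUt : U = ⋃ V ∈ t, id V := by
      apply Subset.antisymm
      · intro x hx
        obtain ⟨v, hvb, hxv, hvU⟩ := hb.exists_subset_of_mem_open hx hU
        refine mem_iUnion₂.2 ⟨v, ⟨⟨{v}, ⟨finite_singleton v, singleton_subset_iff.2 hvb⟩, ?_⟩, hvU⟩, hxv⟩
        simp
      · exact iUnion₂_subset fun V hV => hV.2
    rw [hUt, measure_biUnion_eq_iSup htc hdir] at hc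
    obtain ⟨V, hV⟩ := lt_iSup_iff.1 hc
    obtain ⟨hVt, hV⟩ := lt_iSup_iff.1 hV
    obtain ⟨i, hi⟩ : V ∈ range W := hW ▸ hVt.1
    exact ⟨i, by rw [hi]; exact hVt.2, by rw [hi]; exact hV⟩

end MainPart

section EntPart

variable [MetricSpace X] [CompactSpace X]

lemma exists_dynBall_cover {T : X → X} (hT : Continuous T) (n : ℕ) {ε : ℝ} (hε : 0 < ε) :
    ∃ F : Finset X, (⋃ x ∈ F, dynBall T n x ε) = univ := by
  obtain ⟨F, hF⟩ := isCompact_univ.elim_finite_subcover (fun x : X => dynBall T n x ε)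
    (fun x => isOpen_dynBall hT n x hε) (fun x _ => mem_iUnion.2 ⟨x, by
      rw [mem_dynBall_iff T hε]
      intro k _
      simpa using hε⟩)
  exact ⟨F, univ_subset_iff.1 hF⟩

lemma dynCov_dynBall (T : X → X) (n : ℕ) {ε : ℝ} (hε : 0 < ε) (F : Finset X) :
    DynCov T (2 * ε) n (⋃ x ∈ F, dynBall T n x ε) F.card := by
  classical
  refine ⟨F.image fun x => dynBall T n x ε, ?_, ?_, ?_⟩
  · intro A hA x hx y hy
    obtain ⟨z, _, rfl⟩ := Finset.mem_image.1 hA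
    rw [mem_dynBall_iff T hε] at hx hy
    refine dynDist_le T (by positivity) fun k hk => ?_
    have h1 := hx k hk
    have h2 := hy k hk
    have h3 := dist_triangle_left (T^[k] x) (T^[k] y) (T^[k] z)
    linarith
  · intro x hx
    obtain ⟨z, hz, hx⟩ := mem_iUnion₂.1 hx
    exact ⟨_, by simpa using ⟨z, hz, rfl⟩, hx⟩
  · exact_mod_cast Finset.card_image_le

lemma card_le_of_dynCov {T : X → X} {r : ℝ} {n : ℕ} {a : ℝ} (h : DynCov T r n univ a)
    {E : Finset X} (hE : ∀ x ∈ E, ∀ y ∈ E, x ≠ y → r < dynDist T n x y) : (E.card : ℝ) ≤ a := by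
  obtain ⟨F, hF, hcov, hcard⟩ := h
  refine le_trans ?_ hcard
  choose f hf hxf using fun x : X => hcov (mem_univ x)
  have : E.card ≤ F.card := by
    refine Finset.card_le_card_of_injOn f (fun x _ => hf x) ?_
    intro x hx y hy hxy
    by_contra hne
    exact absurd (hE x hx y hy hne) (not_lt.2 (hF _ (hf x) x (hxf x) y (hxy ▸ hxf y)))
  exact_mod_cast this

lemma sepNum_le {T : X → X} {r : ℝ} {n : ℕ} {a : ℝ} (h : DynCov T r n univ a) :
    (sepNum T n univ r : ℝ) ≤ a := by
  have h1 : sepNum T n univ r ≤ ⌊a⌋₊ := by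
    refine csSup_le ⟨0, ∅, by simp⟩ ?_
    rintro m ⟨E, _, hE, rfl⟩
    exact Nat.le_floor (card_le_of_dynCov h hE)
  exact (Nat.cast_le.2 h1).trans (Nat.floor_le h.nonneg)

lemma sepEnt_le_of {T : X → X} {r C c : ℝ} (hC : 1 ≤ C) (hc : 0 ≤ c)
    (h : ∀ᶠ N : ℕ in atTop, (sepNum T N univ r : ℝ) ≤ C * Real.exp (c * N)) :
    sepEnt T univ r ≤ (c : EReal) := by
  have ht : Tendsto (fun N : ℕ => ((Real.log C / N + c : ℝ) : EReal)) atTop (𝓝 (c : EReal)) := by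
    refine (continuous_coe_real_ereal.tendsto _).comp ?_
    simpa using (tendsto_const_div_atTop_nhds_zero_nat (Real.log C)).add_const c
  rw [← ht.limsup_eq]
  refine limsup_le_limsup ?_
  filter_upwards [h, eventually_gt_atTop 0] with N hN hN0
  have hN0' : (0 : ℝ) < N := by exact_mod_cast hN0
  rw [EReal.coe_le_coe_iff, div_add' _ _ _ hN0'.ne']
  refine div_le_div_of_nonneg_right ?_ hN0'.le
  rcases Nat.eq_zero_or_pos (sepNum T N univ r) with h0 | h0
  · rw [h0]
    have := Real.log_nonneg hC
    simp only [Nat.cast_zero, Real.log_zero]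
    positivity
  · calc _ ≤ Real.log (C * Real.exp (c * N)) := Real.log_le_log (by exact_mod_cast h0) hN
      _ = _ := by rw [Real.log_mul (by linarith) (Real.exp_pos _).ne', Real.log_exp]

lemma sepEnt_nonneg (T : X → X) (r : ℝ) : 0 ≤ sepEnt T univ r := by
  refine le_limsup_of_frequently_le (Frequently.of_forall fun n => ?_)
  exact_mod_cast div_nonneg (Real.log_natCast_nonneg _) (Nat.cast_nonneg _)

variable [MeasurableSpace X] [BorelSpace X]

lemma katokEnt_nonneg (T : X → X) (μ : Measure X) (ε δ : ℝ) : 0 ≤ katokEnt T μ ε δ := by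
  refine le_limsup_of_frequently_le (Frequently.of_forall fun n => ?_)
  exact_mod_cast div_nonneg (Real.log_natCast_nonneg _) (Nat.cast_nonneg _)

lemma katokNum_spec {T : X → X} (hT : Continuous T) (μ : Measure X) [IsProbabilityMeasure μ]
    (n : ℕ) {ε δ : ℝ} (hε : 0 < ε) (hδ : δ < 1) :
    ∃ F : Finset X, ENNReal.ofReal δ < μ (⋃ x ∈ F, dynBall T n x ε) ∧
      F.card = katokNum T μ n ε δ := by
  obtain ⟨F, hF⟩ := exists_dynBall_cover hT n hε
  refine Nat.sInf_mem (s := {m | ∃ F : Finset X, ENNReal.ofReal δ < μ (⋃ x ∈ F, dynBall T n x ε) ∧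
      F.card = m}) ⟨F.card, F, ?_, rfl⟩
  rw [hF, measure_univ]
  exact ENNReal.ofReal_lt_one.2 hδ

lemma katokNum_le_sepNum {T : X → X} (hT : Continuous T) (μ : Measure X) [IsProbabilityMeasure μ]
    (n : ℕ) {ε δ : ℝ} (hε : 0 < ε) (hδ : δ < 1) :
    katokNum T μ n ε δ ≤ sepNum T n univ (ε / 2) := by
  classical
  obtain ⟨G, hG⟩ := exists_dynBall_cover hT n (show 0 < ε / 4 by positivity)
  have hcov := dynCov_dynBall T n (show 0 < ε / 4 by positivity) G
  rw [hG, show 2 * (ε / 4) = ε / 2 by ring] at hcov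
  have hbdd : BddAbove {m | ∃ E : Finset X, ↑E ⊆ (univ : Set X) ∧
      (∀ x ∈ E, ∀ y ∈ E, x ≠ y → ε / 2 < dynDist T n x y) ∧ E.card = m} := by
    refine ⟨G.card, ?_⟩
    rintro m ⟨E, _, hE, rfl⟩
    exact_mod_cast card_le_of_dynCov hcov hE
  have hne : {m | ∃ E : Finset X, ↑E ⊆ (univ : Set X) ∧
      (∀ x ∈ E, ∀ y ∈ E, x ≠ y → ε / 2 < dynDist T n x y) ∧ E.card = m}.Nonempty :=
    ⟨0, ∅, by simp⟩
  obtain ⟨E, -, hE, hEc⟩ := Nat.sSup_mem hne hbdd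
  refine Nat.sInf_le ⟨E, ?_, hEc⟩
  have hsymm : ∀ x y, dynDist T n x y = dynDist T n y x := by
    intro x y
    simp only [dynDist, dist_comm]
  have : (⋃ x ∈ E, dynBall T n x ε) = univ := by
    refine eq_univ_of_forall fun y => ?_
    by_contra hy
    have hy' : ∀ x ∈ E, ε ≤ dynDist T n x y := by
      intro x hx
      by_contra hlt
      exact hy (mem_iUnion₂.2 ⟨x, hx, not_le.1 hlt⟩)
    have hyE : y ∉ E := by
      intro hyE
      refine hy (mem_iUnion₂.2 ⟨y, hyE, ?_⟩)
      rw [mem_dynBall_iff T hε]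
      intro k _
      simpa using hε
    have hle : (insert y E).card ≤ sepNum T n univ (ε / 2) := by
      refine le_csSup hbdd ⟨insert y E, subset_univ _, ?_, rfl⟩
      intro a ha b hb hab
      rcases Finset.mem_insert.1 ha with rfl | ha' <;> rcases Finset.mem_insert.1 hb with rfl | hb'
      · exact absurd rfl hab
      · rw [hsymm]
        linarith [hy' b hb']
      · linarith [hy' a ha']
      · exact hE a ha' b hb' hab
    rw [Finset.card_insert_of_notMem hyE] at hle
    have : E.card = sepNum T n univ (ε / 2) := hEc
    lia
  rw [this, measure_univ]
  exact ENNReal.ofReal_lt_one.2 hδ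

lemma katokEnt_le_sepEnt {T : X → X} (hT : Continuous T) {μ : Measure X}
    (hμ : μ ∈ ergodicMeasures T) {ε δ : ℝ} (hε : 0 < ε) (hδ : δ < 1) :
    katokEnt T μ ε δ ≤ sepEnt T univ (ε / 2) := by
  have := hμ.1
  refine limsup_le_limsup (Eventually.of_forall fun n => ?_)
  have h := katokNum_le_sepNum hT μ n hε hδ
  rw [EReal.coe_le_coe_iff]
  refine div_le_div_of_nonneg_right ?_ (Nat.cast_nonneg _)
  rcases Nat.eq_zero_or_pos (katokNum T μ n ε δ) with h0 | h0
  · rw [h0]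
    simpa using Real.log_natCast_nonneg _
  · exact Real.log_le_log (by exact_mod_cast h0) (by exact_mod_cast h)

lemma katok_sets {T : X → X} (hT : Continuous T) {μ : Measure X}
    (hμ : μ ∈ ergodicMeasures T) {ε δ s : ℝ} (hε : 0 < ε) (hδ : δ < 1)
    (h : katokEnt T μ ε δ < (s : EReal)) :
    ∃ A : ℕ → Set X, (∀ n, IsOpen (A n)) ∧ (∀ n, DynCov T (2 * ε) n (A n) (Real.exp (n * s))) ∧
      ∀ᶠ n in atTop, ENNReal.ofReal δ ≤ μ (A n) := by
  classical
  have := hμ.1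
  have hev : ∀ᶠ n : ℕ in atTop, (katokNum T μ n ε δ : ℝ) ≤ Real.exp (n * s) := by
    filter_upwards [eventually_lt_of_limsup_lt h, eventually_gt_atTop 0] with n hn hn0
    have hn0' : (0 : ℝ) < n := by exact_mod_cast hn0
    rw [EReal.coe_lt_coe_iff, div_lt_iff₀ hn0'] at hn
    rcases Nat.eq_zero_or_pos (katokNum T μ n ε δ) with h0 | h0
    · rw [h0]
      simpa using (Real.exp_pos _).le
    · rw [← Real.log_le_iff_le_exp (by exact_mod_cast h0)]
      linarith
  choose F hF hFc using fun n => katokNum_spec hT μ n hε hδ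
  refine ⟨fun n => if (katokNum T μ n ε δ : ℝ) ≤ Real.exp (n * s) then
    ⋃ x ∈ F n, dynBall T n x ε else ∅, ?_, ?_, ?_⟩
  · intro n
    dsimp only
    split_ifs
    · exact isOpen_biUnion fun x _ => isOpen_dynBall hT n x hε
    · exact isOpen_empty
  · intro n
    dsimp only
    split_ifs with hn
    · exact (dynCov_dynBall T n hε (F n)).mono Subset.rfl (by rw [hFc]; exact hn)
    · exact DynCov.empty n (Real.exp_pos _).le
  · filter_upwards [hev] with n hn
    rw [if_pos hn]
    exact (hF n).le

end EntPart

section LastPart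

variable [MetricSpace X] [CompactSpace X] [MeasurableSpace X] [BorelSpace X]

lemma sepEnt_le_aux {T : X → X} (hT : Continuous T) {ε δ s η : ℝ} (hε : 0 < ε)
    (hδ : δ ∈ Ioo (0 : ℝ) 1) (hs : 0 ≤ s) (hη : 0 < η)
    (h : ∀ μ ∈ ergodicMeasures T, katokEnt T μ ε δ < (s : EReal)) :
    sepEnt T univ (2 * ε) ≤ ((s + 5 * η : ℝ) : EReal) := by
  classical
  have hr : 0 ≤ 2 * ε := by positivity
  obtain ⟨P, hP1, hP⟩ : ∃ P : ℝ, 1 ≤ P ∧ DynCov T (2 * ε) 1 univ P := by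
    obtain ⟨F, hF⟩ := exists_dynBall_cover hT 1 hε
    have := dynCov_dynBall T 1 hε F
    rw [hF] at this
    exact ⟨max 1 F.card, le_max_left _ _, this.mono Subset.rfl (le_max_right _ _)⟩
  set β := Real.log (2 * P) with hβdef
  have hβ : 0 < β := Real.log_pos (by linarith)
  have hPβ : P * Real.exp (-β) ≤ 1 / 2 := by
    rw [Real.exp_neg, hβdef, Real.exp_log (by linarith)]
    apply le_of_eq
    field_simp
  obtain ⟨θ, hθ0, hθ1, hθβ⟩ : ∃ θ : ℝ, 0 < θ ∧ θ < 1 ∧ β * θ ≤ η := by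
    refine ⟨min (1 / 2) (η / β), by positivity, ?_, ?_⟩
    · exact (min_le_left _ _).trans_lt (by norm_num)
    · calc β * min (1 / 2) (η / β) ≤ β * (η / β) := by gcongr; exact min_le_right _ _
        _ = η := by field_simp
  obtain ⟨W, hWo, hW⟩ := exists_countable_opens (X := X)
  set Good : Set X → Prop := fun V => ∃ C : ℝ, 0 ≤ C ∧ ∀ N b : ℕ,
    DynCov T (2 * ε) N (fewBad T V N b) (C * Real.exp ((s + η) * N + β * b)) with hGood
  have hμW : ∀ μ ∈ ergodicMeasures T, ∃ i, Good (W i) ∧ μ (W i)ᶜ ≤ ENNReal.ofReal (θ ^ 2) := by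
    intro μ hμ
    have hprob := hμ.1
    obtain ⟨A, hAo, hA, hAμ⟩ := katok_sets hT hμ hε hδ.2 (h μ hμ)
    obtain ⟨U, hUo, hUμ, C, hC, hU⟩ := bootstrap hT hr hμ (ENNReal.ofReal_pos.2 hδ.1) hs
      (show s < s + η by linarith) hβ.le hP hPβ A hAo hA hAμ
      (c := ENNReal.ofReal (1 - θ ^ 2)) (ENNReal.ofReal_lt_one.2 (by nlinarith))
    obtain ⟨i, hi, hiμ⟩ := hW μ U _ hUo hUμ
    refine ⟨i, ⟨C, hC, fun N b => (hU N b).mono (fewBad_mono T hi N b) le_rfl⟩, ?_⟩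
    rw [prob_compl_eq_one_sub (hWo i).measurableSet]
    refine (tsub_le_tsub_left hiμ.le 1).trans ?_
    rw [← ENNReal.ofReal_one, ← ENNReal.ofReal_sub _ (by nlinarith)]
    exact ENNReal.ofReal_le_ofReal (by linarith)
  have hchoose : ∀ i : ℕ, ∃ (A : Set X) (K : ℕ) (a : ℝ), IsOpen A ∧ 1 ≤ K ∧
      DynCov T (2 * ε) K A a ∧ a * Real.exp (-(s + 3 * η) * K) ≤ (1 / 2) ^ (i + 2) ∧
      (Good (W i) → ∀ μ ∈ ergodicMeasures T, μ (W i)ᶜ ≤ ENNReal.ofReal (θ ^ 2) →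
        μ Aᶜ ≤ ENNReal.ofReal θ) := by
    intro i
    by_cases hg : Good (W i)
    · obtain ⟨C, hC, hcov⟩ := hg
      have ht : Tendsto (fun K : ℕ => C * Real.exp (-η * K)) atTop (𝓝 (C * 0)) := by
        refine Tendsto.const_mul C (Real.tendsto_exp_atBot.comp ?_)
        exact tendsto_natCast_atTop_atTop.const_mul_atTop_of_neg (by linarith)
      rw [mul_zero] at ht
      obtain ⟨K, hK, hK1⟩ := ((ht.eventually_le_const
        (show (0 : ℝ) < (1 / 2) ^ (i + 2) by positivity)).and (eventually_ge_atTop 1)).exists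
      refine ⟨fewBad T (W i) K ⌊θ * K⌋₊, K, _, isOpen_fewBad hT (hWo i) _ _, hK1,
        hcov K ⌊θ * K⌋₊, ?_, fun _ μ hμ hWμ => ?_⟩
      · refine le_trans ?_ hK
        rw [mul_assoc, ← Real.exp_add]
        refine mul_le_mul_of_nonneg_left (Real.exp_le_exp.2 ?_) hC
        have h1 : (⌊θ * K⌋₊ : ℝ) ≤ θ * K := Nat.floor_le (by positivity)
        have h2 : β * (⌊θ * K⌋₊ : ℝ) ≤ η * K :=
          calc β * (⌊θ * K⌋₊ : ℝ) ≤ β * (θ * K) := by gcongr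
            _ = (β * θ) * K := by ring
            _ ≤ η * K := by gcongr
        nlinarith
      · exact measure_fewBad hT hμ.2.toMeasurePreserving (hWo i) hθ0 hWμ hK1
    · exact ⟨∅, 1, 0, isOpen_empty, le_rfl, DynCov.empty 1 le_rfl, by rw [zero_mul]; positivity,
        fun hg' => absurd hg' hg⟩
  choose A K a hAo hK hA ha hAμ using hchoose
  obtain ⟨q, N₀, hq⟩ := uniform_visits hT A hAo hθ0 (by
    intro μ hμ
    obtain ⟨i, hg, hi⟩ := hμW μ hμ
    exact (measure_mono (compl_subset_compl.2 (subset_iUnion A i))).trans (hAμ i hg μ hμ hi))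
  obtain ⟨C, hC, hcov⟩ := coding hr (Finset.range q) K A a (fun j _ => hK j) (fun j _ => hA j)
    (s := s + 3 * η) (by positivity) hβ.le (by
      calc _ ≤ ∑ i ∈ Finset.range q, (1 / 2 : ℝ) ^ (i + 2) := Finset.sum_le_sum fun i _ => ha i
        _ = (∑ i ∈ Finset.range q, (1 / 2 : ℝ) ^ i) * (1 / 4) := by
            rw [Finset.sum_mul]
            refine Finset.sum_congr rfl fun i _ => ?_
            ring
        _ ≤ 2 * (1 / 4) := by
            refine mul_le_mul_of_nonneg_right ?_ (by norm_num)
            exact sum_geometric_two_le q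
        _ = 1 / 2 := by norm_num) hP hPβ
  refine sepEnt_le_of (C := C + 1) (by linarith) (by positivity) ?_
  filter_upwards [eventually_ge_atTop N₀] with N hN
  have huniv : (univ : Set X) ⊆ fewBad T (⋃ j ∈ Finset.range q, A j) N ⌊2 * θ * N⌋₊ := by
    intro x _
    exact Nat.le_floor (hq N hN x)
  refine sepNum_le ((hcov N ⌊2 * θ * N⌋₊).mono huniv ?_)
  refine mul_le_mul (by linarith) (Real.exp_le_exp.2 ?_) (Real.exp_pos _).le (by linarith)
  have h1 : (⌊2 * θ * N⌋₊ : ℝ) ≤ 2 * θ * N := Nat.floor_le (by positivity)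
  have h2 : β * (⌊2 * θ * N⌋₊ : ℝ) ≤ 2 * η * N :=
    calc β * (⌊2 * θ * N⌋₊ : ℝ) ≤ β * (2 * θ * N) := by gcongr
      _ = 2 * (β * θ) * N := by ring
      _ ≤ 2 * η * N := by gcongr
  nlinarith

lemma sepEnt_le_iSup [Nonempty X] {T : X → X} (hT : Continuous T) {ε δ : ℝ} (hε : 0 < ε)
    (hδ : δ ∈ Ioo (0 : ℝ) 1) :
    sepEnt T univ ε ≤ ⨆ μ ∈ ergodicMeasures T, katokEnt T μ (ε / 2) δ := by
  obtain ⟨μ₀, hμ₀⟩ := exists_ergodic hT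
  refine EReal.le_of_forall_lt_iff_le.1 fun z hz => ?_
  obtain ⟨s, hs1, hs2⟩ := EReal.lt_iff_exists_real_btwn.1 hz
  have hk : ∀ μ ∈ ergodicMeasures T, katokEnt T μ (ε / 2) δ < (s : EReal) := fun μ hμ =>
    (le_iSup₂ (f := fun μ (_ : μ ∈ ergodicMeasures T) => katokEnt T μ (ε / 2) δ) μ hμ).trans_lt hs1
  have hs : 0 ≤ s := by
    exact_mod_cast (katokEnt_nonneg T μ₀ (ε / 2) δ).trans (hk μ₀ hμ₀).le
  have hsz : s < z := by exact_mod_cast hs2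
  have := sepEnt_le_aux hT (half_pos hε) hδ hs (show 0 < (z - s) / 5 by linarith) hk
  rw [show 2 * (ε / 2) = ε by ring, show s + 5 * ((z - s) / 5) = z by ring] at this
  exact this

lemma liminf_comp {f g : ℝ → EReal} (hg : ∀ ε, 0 ≤ g ε)
    (h : ∀ ε, 0 < ε → f ε ≤ g (ε / 2)) :
    liminf (fun ε : ℝ => f ε / ((Real.log (1 / ε) : ℝ) : EReal)) (𝓝[>] (0 : ℝ)) ≤
      liminf (fun ε : ℝ => g ε / ((Real.log (1 / ε) : ℝ) : EReal)) (𝓝[>] (0 : ℝ)) := by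
  refine EReal.le_of_forall_lt_iff_le.1 fun z hz => ?_
  obtain ⟨c, hc1, hc2⟩ := EReal.lt_iff_exists_real_btwn.1 hz
  have hcz : c < z := by exact_mod_cast hc2
  have hfr := frequently_lt_of_liminf_lt (by isBoundedDefault) hc1
  have hlog : Tendsto (fun ε : ℝ => Real.log (1 / ε)) (𝓝[>] (0 : ℝ)) atTop := by
    simp only [one_div]
    exact Real.tendsto_log_atTop.comp tendsto_inv_nhdsGT_zero
  have hpos : ∀ᶠ ε : ℝ in 𝓝[>] (0 : ℝ), 0 < ε := self_mem_nhdsWithin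
  have hbig : ∀ᶠ ε : ℝ in 𝓝[>] (0 : ℝ), Real.log 2 < Real.log (1 / ε) ∧
      z * Real.log 2 / (z - c) ≤ Real.log (1 / ε) :=
    (hlog.eventually_gt_atTop _).and (hlog.eventually_ge_atTop _)
  have hfr2 : ∃ᶠ ε : ℝ in 𝓝[>] (0 : ℝ),
      f (2 * ε) / ((Real.log (1 / (2 * ε)) : ℝ) : EReal) ≤ (z : EReal) := by
    refine (hfr.and_eventually (hpos.and hbig)).mono ?_
    rintro ε ⟨hlt, hε, hl1, hl2⟩
    have hl2pos := Real.log_pos (show (1 : ℝ) < 2 by norm_num)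
    have e : Real.log (1 / (2 * ε)) = Real.log (1 / ε) - Real.log 2 := by
      rw [one_div, one_div, mul_inv, Real.log_mul (by norm_num) (by positivity),
        Real.log_inv 2]
      ring
    have hfg := h (2 * ε) (by positivity)
    rw [show 2 * ε / 2 = ε by ring] at hfg
    set L := Real.log (1 / ε) with hL
    have hLpos : 0 < L := hl2pos.trans hl1
    have hgle : g ε ≤ ((c * L : ℝ) : EReal) := by
      have := (EReal.div_lt_iff (by exact_mod_cast hLpos) (EReal.coe_ne_top _)).1 hlt
      rw [EReal.coe_mul]
      exact this.le
    rw [e, EReal.div_le_iff_le_mul (by exact_mod_cast (by linarith : 0 < L - Real.log 2))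
      (EReal.coe_ne_top _)]
    refine (hfg.trans hgle).trans ?_
    rw [← EReal.coe_mul, EReal.coe_le_coe_iff]
    rw [div_le_iff₀ (by linarith)] at hl2
    nlinarith
  have htwo : Tendsto (fun ε : ℝ => 2 * ε) (𝓝[>] (0 : ℝ)) (𝓝[>] (0 : ℝ)) := by
    refine tendsto_nhdsWithin_iff.2 ⟨?_, ?_⟩
    · have : Tendsto (fun ε : ℝ => 2 * ε) (𝓝 (0 : ℝ)) (𝓝 (2 * 0)) := tendsto_id.const_mul 2
      rw [mul_zero] at this
      exact this.mono_left nhdsWithin_le_nhds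
    · filter_upwards [hpos] with ε hε
      exact mul_pos two_pos hε
  have hfr3 := htwo.frequently (p := fun ε => f ε / ((Real.log (1 / ε) : ℝ) : EReal) ≤ (z : EReal)) hfr2
  exact liminf_le_of_frequently_le hfr3 (by isBoundedDefault)

end LastPart

section Theorems

variable [MetricSpace X] [CompactSpace X] [Nonempty X] [MeasurableSpace X] [BorelSpace X]

/-- Variational principle for the lower metric mean dimension in terms of Katok's
entropy (Theorem 4.2, second part). -/
theorem lower_mdim_eq_liminf_katok (T : X → X) (hT : IsHomeomorph T)
    (δ : ℝ) (hδ : δ ∈ Set.Ioo (0:ℝ) 1) :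
    mdimLower T = liminf (fun ε : ℝ =>
      (⨆ μ ∈ ergodicMeasures T, katokEnt T μ ε δ)
        / ((Real.log (1 / ε) : ℝ) : EReal)) (𝓝[>] (0:ℝ)) := by
  have hTc := hT.continuous
  refine le_antisymm ?_ ?_
  · refine liminf_comp (f := fun ε => sepEnt T univ ε)
      (g := fun ε => ⨆ μ ∈ ergodicMeasures T, katokEnt T μ ε δ) ?_ ?_
    · intro ε
      obtain ⟨μ, hμ⟩ := exists_ergodic hTc
      exact (katokEnt_nonneg T μ ε δ).trans
        (le_iSup₂ (f := fun μ (_ : μ ∈ ergodicMeasures T) => katokEnt T μ ε δ) μ hμ)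
    · intro ε hε
      exact sepEnt_le_iSup hTc hε hδ
  · refine liminf_comp (f := fun ε => ⨆ μ ∈ ergodicMeasures T, katokEnt T μ ε δ)
      (g := fun ε => sepEnt T univ ε) (fun ε => sepEnt_nonneg T ε) ?_
    intro ε hε
    exact iSup₂_le fun μ hμ => katokEnt_le_sepEnt hTc hμ hε hδ.2

end Theorems
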